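/- Let q = 2^e with e ≥ 2 (so q > 2 is a power of 2), let k ≥ 1 be an integer with (q,k) ≠ (4,1), and suppose the direct power L₂(q)^k of the projective special linear group L₂(q) = PSL(2, F_q) over the field F_q with q elements is generated by two elements. Then L₂(q)^k is a purely strongly real Beauville group: it admits a Beauville structure, and every Beauville structure of L₂(q)^k is strongly real. -/

import Mathlib

/-- `beauvilleSigma x y` is Σ(x,y): the set of all conjugates of all powers of
`x`, `y` and `x*y` in the group `G`. -/
def beauvilleSigma {G : Type*} [Group G] (x y : G) : Set G :=
  {a | ∃ (i : ℕ) (g : G),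
      a = g * x ^ i * g⁻¹ ∨ a = g * y ^ i * g⁻¹ ∨ a = g * (x * y) ^ i * g⁻¹}

/-- `{(x₁,y₁),(x₂,y₂)}` is a Beauville structure for `G`:
both pairs generate `G` and `Σ(x₁,y₁) ∩ Σ(x₂,y₂) = {1}`. -/
def IsBeauvilleStructure {G : Type*} [Group G] (x₁ y₁ x₂ y₂ : G) : Prop :=
  Subgroup.closure {x₁, y₁} = ⊤ ∧ Subgroup.closure {x₂, y₂} = ⊤ ∧
    beauvilleSigma x₁ y₁ ∩ beauvilleSigma x₂ y₂ = {1}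

/-- A Beauville structure `{(x₁,y₁),(x₂,y₂)}` is strongly real if there are an
automorphism `φ` of `G` and elements `g₁ g₂ : G` with
`gᵢ * φ xᵢ * gᵢ⁻¹ = xᵢ⁻¹` and `gᵢ * φ yᵢ * gᵢ⁻¹ = yᵢ⁻¹` for `i = 1, 2`. -/
def IsStronglyRealStructure {G : Type*} [Group G] (x₁ y₁ x₂ y₂ : G) : Prop :=
  ∃ (φ : G ≃* G) (g₁ g₂ : G),
    g₁ * φ x₁ * g₁⁻¹ = x₁⁻¹ ∧ g₁ * φ y₁ * g₁⁻¹ = y₁⁻¹ ∧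
    g₂ * φ x₂ * g₂⁻¹ = x₂⁻¹ ∧ g₂ * φ y₂ * g₂⁻¹ = y₂⁻¹

open scoped MatrixGroups


namespace BV

/-- `S` has a generating pair `(x, y)` with `x`, `y`, `xy` of orders `l`, `m`, `n`. -/
def HasType (S : Type*) [Group S] (l m n : ℕ) : Prop :=
  ∃ x y : S, Subgroup.closure {x, y} = ⊤ ∧ orderOf x = l ∧ orderOf y = m ∧ orderOf (x * y) = n

section abstract_groups

variable {S : Type*} [Group S]

lemma closure_pair_le {G : Type*} [Group G] {x y : G} {H : Subgroup G} (hx : x ∈ H) (hy : y ∈ H) :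
    Subgroup.closure {x, y} ≤ H := by
  rw [Subgroup.closure_le]
  rintro z (rfl | rfl)
  · exact hx
  · exact hy

lemma mem_closure_pair_left {G : Type*} [Group G] (x y : G) :
    x ∈ Subgroup.closure {x, y} := Subgroup.subset_closure (by simp)

lemma mem_closure_pair_right {G : Type*} [Group G] (x y : G) :
    y ∈ Subgroup.closure {x, y} := Subgroup.subset_closure (by simp)

lemma orderOf_mul_swap (x y : S) : orderOf (y * x) = orderOf (x * y) := by
  have : SemiconjBy x (y * x) (x * y) := by
    simp [SemiconjBy, mul_assoc]
  exact this.orderOf_eq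

lemma HasType.swap12 {l m n : ℕ} (h : HasType S l m n) : HasType S m l n := by
  obtain ⟨x, y, hg, hx, hy, hz⟩ := h
  refine ⟨y, x, ?_, hy, hx, ?_⟩
  · rw [Set.pair_comm]; exact hg
  · rw [orderOf_mul_swap]; exact hz

lemma HasType.swap23 {l m n : ℕ} (h : HasType S l m n) : HasType S l n m := by
  obtain ⟨x, y, hg, hx, hy, hz⟩ := h
  refine ⟨x⁻¹, x * y, ?_, by simpa using hx, hz, by simpa using hy⟩
  rw [eq_top_iff, ← hg]
  have h1 : x ∈ Subgroup.closure {x⁻¹, x * y} := by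
    simpa using inv_mem (mem_closure_pair_left x⁻¹ (x * y))
  refine closure_pair_le h1 ?_
  have := mul_mem (inv_mem h1) (mem_closure_pair_right x⁻¹ (x * y))
  simpa using this

/-- A generating pair of a power projects to generating pairs. -/
lemma proj_gen {ι : Type*} {x y : ι → S} (h : Subgroup.closure {x, y} = ⊤) (i : ι) :
    Subgroup.closure {x i, y i} = ⊤ := by
  classical
  rw [eq_top_iff]
  intro s _
  have hle : Subgroup.closure {x, y} ≤
      (Subgroup.closure {x i, y i}).comap (Pi.evalMonoidHom (fun _ : ι => S) i) :=
    closure_pair_le (mem_closure_pair_left _ _) (mem_closure_pair_right _ _)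
  rw [h] at hle
  have := hle (Subgroup.mem_top (fun _ => s))
  simpa using this

/-- Equivalence of pairs under automorphisms. -/
def PairEquiv (p q : S × S) : Prop := ∃ φ : S ≃* S, φ p.1 = q.1 ∧ φ p.2 = q.2

lemma proj_ineq [Nontrivial S] {ι : Type*} {x y : ι → S} (h : Subgroup.closure {x, y} = ⊤)
    {i j : ι} (hij : i ≠ j) : ¬ PairEquiv (x i, y i) (x j, y j) := by
  classical
  rintro ⟨φ, h1, h2⟩
  have hle : Subgroup.closure {x, y} ≤
      (φ.toMonoidHom.comp (Pi.evalMonoidHom (fun _ : ι => S) i)).eqLocus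
        (Pi.evalMonoidHom (fun _ : ι => S) j) :=
    closure_pair_le h1 h2
  rw [h] at hle
  obtain ⟨s, hs⟩ := exists_ne (1 : S)
  have := hle (Subgroup.mem_top (Pi.mulSingle i s))
  have h3 : φ ((Pi.mulSingle i s : ι → S) i) = (Pi.mulSingle i s : ι → S) j := this
  rw [Pi.mulSingle_eq_same, Pi.mulSingle_eq_of_ne hij.symm] at h3
  exact hs (by simpa using h3)

/-- Elements `h i` of `h ∈ H` with `h j = 1` for `j ∈ I`. -/
def partialProj {ι : Type*} (H : Subgroup (ι → S)) (i : ι) (I : Finset ι) : Subgroup S where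
  carrier := {s | ∃ h ∈ H, (∀ j ∈ I, h j = 1) ∧ h i = s}
  one_mem' := ⟨1, one_mem _, by simp, rfl⟩
  mul_mem' := by
    rintro _ _ ⟨h, hh, h1, rfl⟩ ⟨g, hg, g1, rfl⟩
    exact ⟨h * g, mul_mem hh hg, fun j hj => by simp [h1 j hj, g1 j hj], rfl⟩
  inv_mem' := by
    rintro _ ⟨h, hh, h1, rfl⟩
    exact ⟨h⁻¹, inv_mem hh, fun j hj => by simp [h1 j hj], rfl⟩

lemma mem_partialProj {ι : Type*} {H : Subgroup (ι → S)} {i : ι} {I : Finset ι} {s : S} :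
    s ∈ partialProj H i I ↔ ∃ h ∈ H, (∀ j ∈ I, h j = 1) ∧ h i = s := Iff.rfl

theorem prod_gen [Finite S] [IsSimpleGroup S] (hnc : ∃ s t : S, s * t ≠ t * s)
    {ι : Type*} [Finite ι] {x y : ι → S}
    (hgen : ∀ i, Subgroup.closure {x i, y i} = ⊤)
    (hineq : ∀ i j, i ≠ j → ¬ PairEquiv (x i, y i) (x j, y j)) :
    Subgroup.closure {x, y} = ⊤ := by
  classical
  have := Fintype.ofFinite ι
  set H := Subgroup.closure {x, y} with hH
  have hxH : x ∈ H := mem_closure_pair_left x y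
  have hyH : y ∈ H := mem_closure_pair_right x y
  have hproj : ∀ i s, ∃ h ∈ H, h i = s := by
    intro i s
    have hle : Subgroup.closure {x i, y i} ≤ H.map (Pi.evalMonoidHom (fun _ : ι => S) i) :=
      closure_pair_le ⟨x, hxH, rfl⟩ ⟨y, hyH, rfl⟩
    rw [hgen i] at hle
    obtain ⟨h, hh, e⟩ := hle (Subgroup.mem_top s)
    exact ⟨h, hh, e⟩
  have hnormal : ∀ i I, (partialProj H i I).Normal := by
    intro i I
    refine ⟨?_⟩
    rintro _ ⟨h, hh, h1, rfl⟩ g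
    obtain ⟨u, hu, rfl⟩ := hproj i g
    exact ⟨u * h * u⁻¹, mul_mem (mul_mem hu hh) (inv_mem hu), fun j hj => by simp [h1 j hj], rfl⟩
  have hpair : ∀ i j, i ≠ j → partialProj H i {j} = ⊤ := by
    intro i j hij
    rcases (hnormal i {j}).eq_bot_or_eq_top with hb | ht
    · exfalso
      have hdet : ∀ h ∈ H, h j = 1 → h i = 1 := by
        intro h hh h1
        have : h i ∈ partialProj H i {j} := ⟨h, hh, by simpa using h1, rfl⟩
        rw [hb] at this
        simpa using this
      choose f hfH hf using hproj j
      have key : ∀ h ∈ H, h i = f (h j) i := by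
        intro h hh
        have := hdet (h * (f (h j))⁻¹) (mul_mem hh (inv_mem (hfH _))) (by simp [hf])
        simpa [mul_inv_eq_one] using this
      let φ : S →* S := MonoidHom.mk' (fun s => f s i) (by
        intro s t
        have := key (f s * f t) (mul_mem (hfH _) (hfH _))
        simp only [Pi.mul_apply, hf] at this
        exact this.symm)
      have hsurj : Function.Surjective φ := by
        intro s
        obtain ⟨h, hh, rfl⟩ := hproj i s
        exact ⟨h j, (key h hh).symm⟩
      refine hineq j i hij.symm ⟨MulEquiv.ofBijective φ
        ⟨Finite.injective_iff_surjective.mpr hsurj, hsurj⟩, ?_, ?_⟩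
      · exact (key x hxH).symm
      · exact (key y hyH).symm
    · exact ht
  have hall : ∀ i (I : Finset ι), i ∉ I → partialProj H i I = ⊤ := by
    intro i I
    induction I using Finset.induction with
    | empty =>
      intro _
      rw [eq_top_iff]
      intro s _
      obtain ⟨h, hh, rfl⟩ := hproj i s
      exact ⟨h, hh, by simp, rfl⟩
    | insert j I hj ih =>
      intro hi
      simp only [Finset.mem_insert, not_or] at hi
      rcases (hnormal i (insert j I)).eq_bot_or_eq_top with hb | ht
      · exfalso
        obtain ⟨s, t, hst⟩ := hnc
        have hs : s ∈ partialProj H i I := by rw [ih hi.2]; trivial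
        have ht : t ∈ partialProj H i {j} := by rw [hpair i j hi.1]; trivial
        obtain ⟨h, hh, h1, rfl⟩ := hs
        obtain ⟨g, hg, g1, rfl⟩ := ht
        have : h i * g i * (h i)⁻¹ * (g i)⁻¹ ∈ partialProj H i (insert j I) := by
          refine ⟨h * g * h⁻¹ * g⁻¹, mul_mem (mul_mem (mul_mem hh hg) (inv_mem hh)) (inv_mem hg),
            ?_, rfl⟩
          intro l hl
          rcases Finset.mem_insert.mp hl with rfl | hl
          · simp [g1 l (by simp)]
          · simp [h1 l hl]
        rw [hb, Subgroup.mem_bot, mul_inv_eq_one, mul_inv_eq_iff_eq_mul] at this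
        exact hst this
      · exact ht
  rw [eq_top_iff]
  intro f _
  refine Subgroup.pi_mem_of_mulSingle_mem f fun i => ?_
  have : f i ∈ partialProj H i (Finset.univ.erase i) := by
    rw [hall i _ (by simp)]; trivial
  obtain ⟨h, hh, h1, h2⟩ := this
  convert hh using 1
  ext j
  by_cases hj : j = i
  · subst hj; simp [h2]
  · rw [Pi.mulSingle_eq_of_ne hj, h1 j (by simp [hj])]

/-- The three elements of a generating triple. -/
def tri {G : Type*} [Group G] (x y : G) : Fin 3 → G := ![x, y, x * y]

lemma mem_sigma {G : Type*} [Group G] {x y a : G} (h : a ∈ beauvilleSigma x y) :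
    ∃ (c : Fin 3) (n : ℕ) (g : G), a = g * tri x y c ^ n * g⁻¹ := by
  obtain ⟨i, g, h | h | h⟩ := h
  · exact ⟨0, i, g, h⟩
  · exact ⟨1, i, g, h⟩
  · exact ⟨2, i, g, h⟩

lemma one_mem_sigma {G : Type*} [Group G] (x y : G) : (1 : G) ∈ beauvilleSigma x y :=
  ⟨0, 1, by simp⟩

lemma core {ι : Type*} {o : Fin 3 → ℕ} (hcop : ∀ c d, c ≠ d → Nat.Coprime (o c) (o d))
    (hord : ∀ g : S, ∃ c, g ^ o c = 1) {p : ℕ} (hp : p.Prime) (X : ι → S) (n : ℕ)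
    (h1 : (X ^ n) ^ p = 1) (h2 : X ^ n ≠ 1) :
    ∃ c, p ∣ o c ∧ ∀ j d, orderOf (X j) = o d → (X j ^ n ≠ 1 ↔ d = c) := by
  have := Fact.mk hp
  obtain ⟨l, hl⟩ := Function.ne_iff.mp h2
  have hl : X l ^ n ≠ 1 := hl
  have hpow : ∀ j, (X j ^ n) ^ p = 1 := fun j => congrFun h1 j
  have hlp : orderOf (X l ^ n) = p :=
    orderOf_eq_prime (hpow l) hl
  obtain ⟨c, hc⟩ := hord (X l)
  have hpc : p ∣ o c := by
    rw [← hlp]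
    exact (orderOf_pow_dvd n).trans (orderOf_dvd_of_pow_eq_one hc)
  refine ⟨c, hpc, fun j d hd => ⟨fun hne => ?_, fun hdc => ?_⟩⟩
  · by_contra hdc
    have hjp : orderOf (X j ^ n) = p := orderOf_eq_prime (hpow j) hne
    have : p ∣ o d := by
      rw [← hjp, ← hd]; exact orderOf_pow_dvd n
    exact hp.one_lt.ne' (Nat.eq_one_of_dvd_coprimes (hcop d c hdc) this hpc)
  · subst hdc
    intro hj
    apply hl
    rw [← orderOf_dvd_iff_pow_eq_one] at hj ⊢
    rw [hd] at hj
    exact (orderOf_dvd_of_pow_eq_one hc).trans hj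

lemma exists_fill [Finite S] [IsSimpleGroup S] (hnc : ∃ s t : S, s * t ≠ t * s)
    {o : Fin 3 → ℕ} (ho : Function.Injective o) (T : Fin 4 → Fin 3 → Fin 3)
    (hT : Function.Injective T) (htype : ∀ j, HasType S (o (T j 0)) (o (T j 1)) (o (T j 2)))
    {k : ℕ} (h2gen : ∃ a b : Fin k → S, Subgroup.closure {a, b} = ⊤) :
    ∃ x y : Fin k → S, Subgroup.closure {x, y} = ⊤ ∧
      ∀ (j : Fin k) (i : Fin 4), j.val = i.val → ∀ c, orderOf (tri x y c j) = o (T i c) := by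
  classical
  let P := {p : S × S // Subgroup.closure {p.1, p.2} = ⊤}
  let st : Setoid P :=
    { r := fun p q => PairEquiv p.1 q.1
      iseqv :=
        { refl := fun p => ⟨MulEquiv.refl S, rfl, rfl⟩
          symm := by
            rintro p q ⟨φ, h1, h2⟩
            exact ⟨φ.symm, by rw [← h1]; simp, by rw [← h2]; simp⟩
          trans := by
            rintro p q r ⟨φ, h1, h2⟩ ⟨ψ, h3, h4⟩
            exact ⟨φ.trans ψ, by simp [h1, h3], by simp [h2, h4]⟩ } }
  have hfinP : Finite P := Subtype.finite
  let Q := Quotient st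
  have hfinQ : Finite Q := Quotient.finite st
  have := Fintype.ofFinite Q
  obtain ⟨a, b, hab⟩ := h2gen
  let F0 : Fin k → Q := fun i => Quotient.mk st ⟨(a i, b i), proj_gen hab i⟩
  have hF0 : Function.Injective F0 := by
    intro i j hij
    by_contra hne
    exact proj_ineq hab hne (Quotient.exact hij)
  have hcard : k ≤ Fintype.card Q := by
    simpa using Fintype.card_le_of_injective F0 hF0
  choose u v huv hu hv hw using htype
  let U : Fin 4 → Q := fun i => Quotient.mk st ⟨(u i, v i), huv i⟩
  have hU : Function.Injective U := by
    intro i j hij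
    obtain ⟨φ, h1, h2⟩ : PairEquiv (u i, v i) (u j, v j) := Quotient.exact hij
    simp only at h1 h2
    apply hT
    funext c
    apply ho
    fin_cases c
    · change o (T i 0) = o (T j 0)
      rw [← hu i, ← hu j, ← h1]; exact (MulEquiv.orderOf_eq φ _).symm
    · change o (T i 1) = o (T j 1)
      rw [← hv i, ← hv j, ← h2]; exact (MulEquiv.orderOf_eq φ _).symm
    · change o (T i 2) = o (T j 2)
      rw [← hw i, ← hw j, ← h1, ← h2, ← map_mul]; exact (MulEquiv.orderOf_eq φ _).symm
  let f : Fin k → Q := fun i => if h : i.val < 4 then U ⟨i.val, h⟩ else F0 i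
  let s : Finset (Fin k) := Finset.univ.filter (fun i => i.val < 4)
  have hfs : Set.InjOn f s := by
    intro i hi j hj hij
    have hi' : i.val < 4 := by simpa [s] using hi
    have hj' : j.val < 4 := by simpa [s] using hj
    simp only [f, hi', hj', dif_pos] at hij
    have := hU hij
    simp only [Fin.mk.injEq] at this
    exact Fin.ext this
  have hsc : (s.image f).card ≤ k := by
    refine Finset.card_image_le.trans ?_
    simpa using Finset.card_le_univ s
  obtain ⟨t, hst, htc⟩ := Finset.exists_superset_card_eq hsc hcard
  obtain ⟨g, hg⟩ := Finset.exists_equiv_extend_of_card_eq (by simpa using htc.symm) hst hfs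
  -- choose representatives
  have hrep : ∀ i : Fin k, ∃ p : P, Quotient.mk st p = (g i : Q) ∧
      ∀ h : i.val < 4, p.1 = (u ⟨i.val, h⟩, v ⟨i.val, h⟩) := by
    intro i
    by_cases h : i.val < 4
    · refine ⟨⟨(u ⟨i.val, h⟩, v ⟨i.val, h⟩), huv _⟩, ?_, fun _ => rfl⟩
      rw [hg i (by simpa [s] using h)]
      simp only [f, h, dif_pos, U]
    · obtain ⟨p, hp⟩ := Quotient.exists_rep (g i : Q)
      exact ⟨p, hp, fun h' => absurd h' h⟩
  choose p hp hp4 using hrep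
  refine ⟨fun i => (p i).1.1, fun i => (p i).1.2, ?_, ?_⟩
  · refine prod_gen hnc (fun i => (p i).2) ?_
    intro i j hij hE
    have : Quotient.mk st (p i) = Quotient.mk st (p j) := Quotient.sound hE
    rw [hp, hp] at this
    exact hij (g.injective (Subtype.ext this))
  · intro j i hji c
    have h4 : j.val < 4 := by omega
    have hi : (⟨j.val, h4⟩ : Fin 4) = i := Fin.ext hji
    have e := hp4 j h4
    rw [hi] at e
    fin_cases c
    · change orderOf ((p j).1.1) = o (T i 0)
      rw [e]; exact hu i
    · change orderOf ((p j).1.2) = o (T i 1)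
      rw [e]; exact hv i
    · change orderOf ((p j).1.1 * (p j).1.2) = o (T i 2)
      rw [e]; exact hw i

/-- First pattern (`0` is order `2`, `1` is order `a`, `2` is order `b`). -/
def pat1 : Fin 4 → Fin 3 → Fin 3 := ![![1, 0, 1], ![2, 1, 2], ![1, 1, 2], ![1, 2, 1]]

/-- Second pattern. -/
def pat2 : Fin 4 → Fin 3 → Fin 3 := ![![1, 1, 2], ![1, 1, 0], ![2, 0, 1], ![0, 1, 1]]

lemma pat_check_full : ∀ X Y c : Fin 3, ¬ ∀ i, (pat1 i X = c ↔ pat2 i Y = c) := by decide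

lemma pat_check_two : ∀ X Y c : Fin 3,
    (∀ i : Fin 4, i.val < 2 → (pat1 i X = c ↔ pat2 i Y = c)) →
    ∀ i : Fin 4, i.val < 2 → pat1 i X ≠ c := by decide

lemma pat_check_three : ∀ X Y c : Fin 3,
    (∀ i : Fin 4, i.val < 3 → (pat1 i X = c ↔ pat2 i Y = c)) →
    ∀ i : Fin 4, i.val < 3 → pat1 i X ≠ c := by decide

theorem exists_beauville [Finite S] [IsSimpleGroup S] (hnc : ∃ s t : S, s * t ≠ t * s)
    {a b : ℕ} (ha : 2 < a) (hb : 2 < b) (h2a : Nat.Coprime 2 a) (h2b : Nat.Coprime 2 b)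
    (hab : Nat.Coprime a b) (hord : ∀ g : S, g ^ 2 = 1 ∨ g ^ a = 1 ∨ g ^ b = 1)
    (t1 : HasType S 2 a a) (t2 : HasType S a a b) (t3 : HasType S a b b) (t4 : HasType S 2 a b)
    {k : ℕ} (hk : 2 ≤ k) (h2gen : ∃ a b : Fin k → S, Subgroup.closure {a, b} = ⊤) :
    ∃ x₁ y₁ x₂ y₂ : Fin k → S, IsBeauvilleStructure x₁ y₁ x₂ y₂ := by
  let o : Fin 3 → ℕ := ![2, a, b]
  have hne : a ≠ b := by
    rintro rfl
    have : a = 1 := by simpa using hab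
    omega
  have ho : Function.Injective o := by
    intro c d h
    fin_cases c <;> fin_cases d <;> simp [o] at h ⊢ <;> omega
  have hcop : ∀ c d, c ≠ d → Nat.Coprime (o c) (o d) := by
    intro c d h
    fin_cases c <;> fin_cases d <;> simp [o] at h ⊢ <;>
      first | exact h2a.symm | exact h2b.symm | exact hab.symm | exact h2a | exact h2b
            | exact hab | simpa using h2a | simpa using h2b
            | simpa using h2a.symm | simpa using h2b.symm
  have hord' : ∀ g : S, ∃ c, g ^ o c = 1 := by
    intro g
    rcases hord g with h | h | h
    · exact ⟨0, h⟩
    · exact ⟨1, h⟩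
    · exact ⟨2, h⟩
  obtain ⟨x₁, y₁, hg1, ht1⟩ := exists_fill hnc ho pat1 (by decide) (by
    intro j
    fin_cases j
    · exact t1.swap12
    · exact t3.swap12
    · exact t2
    · exact t2.swap23) h2gen
  obtain ⟨x₂, y₂, hg2, ht2⟩ := exists_fill hnc ho pat2 (by decide) (by
    intro j
    fin_cases j
    · exact t2
    · exact t1.swap12.swap23
    · exact t4.swap23.swap12
    · exact t1) h2gen
  refine ⟨x₁, y₁, x₂, y₂, hg1, hg2, ?_⟩
  refine Set.Subset.antisymm ?_ (by
    rintro _ rfl; exact ⟨one_mem_sigma _ _, one_mem_sigma _ _⟩)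
  rintro z ⟨hz1, hz2⟩
  by_contra hz
  have hz : z ≠ 1 := hz
  obtain ⟨X, n, g, hX⟩ := mem_sigma hz1
  obtain ⟨Y, m, h, hY⟩ := mem_sigma hz2
  -- pass to an element of prime order
  have hoz : orderOf z ≠ 1 := by simpa [orderOf_eq_one_iff] using hz
  obtain ⟨p, hp, hpz⟩ := Nat.exists_prime_and_dvd hoz
  obtain ⟨N, hN⟩ := hpz
  have hfin : 0 < orderOf z := orderOf_pos z
  have hNpos : 0 < N := by
    rcases Nat.eq_zero_or_pos N with h0 | h0
    · rw [h0] at hN; omega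
    · exact h0
  have hzN : z ^ N ≠ 1 := by
    intro h1
    have h3 := Nat.le_of_dvd hNpos (orderOf_dvd_of_pow_eq_one h1)
    have := hp.two_le
    nlinarith
  have hzNp : (z ^ N) ^ p = 1 := by
    rw [← pow_mul, mul_comm, ← hN, pow_orderOf_eq_one]
  have e1 : z ^ N = g * tri x₁ y₁ X ^ (n * N) * g⁻¹ := by
    rw [hX, conj_pow, ← pow_mul]
  have e2 : z ^ N = h * tri x₂ y₂ Y ^ (m * N) * h⁻¹ := by
    rw [hY, conj_pow, ← pow_mul]
  have a1 : (tri x₁ y₁ X ^ (n * N)) ^ p = 1 := by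
    rw [e1, conj_pow] at hzNp
    simpa [conj_eq_one_iff] using hzNp
  have a2 : tri x₁ y₁ X ^ (n * N) ≠ 1 := by
    intro h1; rw [e1, h1] at hzN; simp at hzN
  have b1 : (tri x₂ y₂ Y ^ (m * N)) ^ p = 1 := by
    rw [e2, conj_pow] at hzNp
    simpa [conj_eq_one_iff] using hzNp
  have b2 : tri x₂ y₂ Y ^ (m * N) ≠ 1 := by
    intro h1; rw [e2, h1] at hzN; simp at hzN
  obtain ⟨c, hpc, hc⟩ := core hcop hord' hp _ _ a1 a2
  obtain ⟨d, hpd, hd⟩ := core hcop hord' hp _ _ b1 b2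
  have hcd : d = c := by
    by_contra hne
    exact hp.one_lt.ne' (Nat.eq_one_of_dvd_coprimes (hcop d c hne) hpd hpc)
  subst hcd
  have hiff : ∀ j, tri x₁ y₁ X j ^ (n * N) ≠ 1 ↔ tri x₂ y₂ Y j ^ (m * N) ≠ 1 := by
    intro j
    have q1 := congrFun e1 j
    have q2 := congrFun e2 j
    rw [q1] at q2
    simp only [Pi.mul_apply, Pi.pow_apply, Pi.inv_apply] at q2
    rw [not_iff_not]
    constructor
    · intro h1
      rw [h1] at q2
      have q3 := q2.symm
      simpa [conj_eq_one_iff] using q3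
    · intro h1
      rw [h1] at q2
      simpa [conj_eq_one_iff] using q2
  have hpat : ∀ i : Fin 4, i.val < k → (pat1 i X = d ↔ pat2 i Y = d) := by
    intro i hi
    rw [← hc ⟨i.val, hi⟩ (pat1 i X) (ht1 _ i rfl X), ← hd ⟨i.val, hi⟩ (pat2 i Y) (ht2 _ i rfl Y)]
    exact hiff _
  obtain ⟨l, hl⟩ := Function.ne_iff.mp a2
  have hl : tri x₁ y₁ X l ^ (n * N) ≠ 1 := hl
  have hlt := l.isLt
  by_cases hk4 : 4 ≤ k
  · exact pat_check_full X Y d fun i => hpat i (by omega)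
  · have hl4 : l.val < 4 := by omega
    have hcl := (hc l (pat1 ⟨l.val, hl4⟩ X) (ht1 l ⟨l.val, hl4⟩ rfl X)).mp hl
    have hk23 : k = 2 ∨ k = 3 := by omega
    rcases hk23 with rfl | rfl
    · exact pat_check_two X Y d hpat ⟨l.val, hl4⟩ hlt hcl
    · exact pat_check_three X Y d hpat ⟨l.val, hl4⟩ hlt hcl

end abstract_groups

end BV

namespace BV

open Matrix Matrix.SpecialLinearGroup

section sl_two

variable {F : Type*} [Field F]

lemma two_zero [CharP F 2] : (2 : F) = 0 := by
  exact_mod_cast CharP.cast_eq_zero F 2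

lemma ext4 {g h : SL(2, F)} (h00 : g 0 0 = h 0 0) (h01 : g 0 1 = h 0 1)
    (h10 : g 1 0 = h 1 0) (h11 : g 1 1 = h 1 1) : g = h := by
  ext i j
  fin_cases i <;> fin_cases j
  · exact h00
  · exact h01
  · exact h10
  · exact h11

lemma mul_e (g h : SL(2, F)) (i j : Fin 2) :
    (g * h) i j = g i 0 * h 0 j + g i 1 * h 1 j := by
  rw [coe_mul, Matrix.mul_apply, Fin.sum_univ_two]

lemma det_e [CharP F 2] (g : SL(2, F)) : g 0 0 * g 1 1 + g 0 1 * g 1 0 = 1 := by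
  have h := g.det_coe
  rw [Matrix.det_fin_two] at h
  have h2 : (2 : F) = 0 := two_zero
  linear_combination h + g 0 1 * g 1 0 * h2

lemma inv_e00 (g : SL(2, F)) : (g⁻¹) 0 0 = g 1 1 := by
  rw [coe_inv, Matrix.adjugate_fin_two]; rfl

lemma inv_e11 (g : SL(2, F)) : (g⁻¹) 1 1 = g 0 0 := by
  rw [coe_inv, Matrix.adjugate_fin_two]; rfl

lemma inv_e01 [CharP F 2] (g : SL(2, F)) : (g⁻¹) 0 1 = g 0 1 := by
  have h2 : (2 : F) = 0 := two_zero
  have : (g⁻¹) 0 1 = - g 0 1 := by rw [coe_inv, Matrix.adjugate_fin_two]; rfl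
  rw [this]; linear_combination -g 0 1 * h2

lemma inv_e10 [CharP F 2] (g : SL(2, F)) : (g⁻¹) 1 0 = g 1 0 := by
  have h2 : (2 : F) = 0 := two_zero
  have : (g⁻¹) 1 0 = - g 1 0 := by rw [coe_inv, Matrix.adjugate_fin_two]; rfl
  rw [this]; linear_combination -g 1 0 * h2

lemma one_e00 : (1 : SL(2, F)) 0 0 = 1 := by simp
lemma one_e01 : (1 : SL(2, F)) 0 1 = 0 := by simp
lemma one_e10 : (1 : SL(2, F)) 1 0 = 0 := by simp
lemma one_e11 : (1 : SL(2, F)) 1 1 = 1 := by simp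

/-- The matrix with rows `(a, b)` and `(c, d)`. -/
def mk [CharP F 2] (a b c d : F) (h : a * d + b * c = 1) : SL(2, F) :=
  ⟨!![a, b; c, d], by
    rw [Matrix.det_fin_two_of]
    have h2 : (2 : F) = 0 := two_zero
    linear_combination h - b * c * h2⟩

variable [CharP F 2]

lemma mk_e00 (a b c d : F) (h) : (mk a b c d h) 0 0 = a := rfl
lemma mk_e01 (a b c d : F) (h) : (mk a b c d h) 0 1 = b := rfl
lemma mk_e10 (a b c d : F) (h) : (mk a b c d h) 1 0 = c := rfl
lemma mk_e11 (a b c d : F) (h) : (mk a b c d h) 1 1 = d := rfl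

/-- The diagonal matrix with entries `s`, `s⁻¹`. -/
def dg (s : F) (hs : s ≠ 0) : SL(2, F) := mk s 0 0 s⁻¹ (by simp [hs])
/-- Upper unitriangular matrix. -/
def up (t : F) : SL(2, F) := mk 1 t 0 1 (by simp)
/-- Lower unitriangular matrix. -/
def low (t : F) : SL(2, F) := mk 1 0 t 1 (by simp)

/-- The trace. -/
def tr (g : SL(2, F)) : F := g 0 0 + g 1 1

lemma tr_conj (u g : SL(2, F)) : tr (u * g * u⁻¹) = tr g := by
  have h := det_e u
  simp only [tr, mul_e, inv_e00, inv_e01, inv_e10, inv_e11]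
  have h2 : (2 : F) = 0 := two_zero
  grind

lemma low_mem_of [Finite F] {H : Subgroup SL(2, F)} (hT : ∀ s (hs : s ≠ 0), dg s hs ∈ H)
    {u : F} (hu : u ≠ 0) (h : low u ∈ H) (t : F) : low t ∈ H := by
  have h2 : (2 : F) = 0 := two_zero
  by_cases ht : t = 0
  · subst ht
    have : (low 0 : SL(2, F)) = 1 := by
      apply ext4 <;> simp [low, mk_e00, mk_e01, mk_e10, mk_e11]
    rw [this]; exact one_mem _
  obtain ⟨s, hs⟩ := FiniteField.isSquare_of_char_two (ringChar.eq F 2) (u / t)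
  have hs0 : s ≠ 0 := by
    rintro rfl
    simp [hu, ht] at hs
  have key : low t = dg s hs0 * low u * (dg s hs0)⁻¹ := by
    apply ext4 <;> simp only [mul_e, low, dg, inv_e00, inv_e01, inv_e10, inv_e11,
      mk_e00, mk_e01, mk_e10, mk_e11] <;> field_simp <;> grind
  rw [key]
  exact mul_mem (mul_mem (hT _ _) h) (inv_mem (hT _ _))

lemma eq_top_of_up_low {H : Subgroup SL(2, F)} (hu : ∀ t, up t ∈ H) (hl : ∀ t, low t ∈ H) :
    H = ⊤ := by
  rw [eq_top_iff]
  intro g _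
  refine SL2.transvection_induction (fun g => g ∈ H) ?_ (fun _ _ => mul_mem) g
  intro i j hij c
  fin_cases i <;> fin_cases j
  · exact absurd rfl hij
  · convert hu c using 1
    apply ext4 <;> simp [up, mk_e00, mk_e01, mk_e10, mk_e11, transvection_coe]
  · convert hl c using 1
    apply ext4 <;> simp [low, mk_e00, mk_e01, mk_e10, mk_e11, transvection_coe]
  · exact absurd rfl hij

lemma up_mem_of_low {H : Subgroup SL(2, F)} (hl : ∀ t, low t ∈ H) {h : SL(2, F)} (hh : h ∈ H)
    (hb : h 0 1 ≠ 0) (t : F) : up t ∈ H := by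
  have h2 : (2 : F) = 0 := two_zero
  have hdet := det_e h
  set a := h 0 0
  set b := h 0 1
  set c := h 1 0
  set d := h 1 1
  have hw : mk 0 b b⁻¹ 0 (by simp [hb]) = low (d / b) * h * low (a / b) := by
    apply ext4 <;> simp only [mul_e, low, mk_e00, mk_e01, mk_e10, mk_e11] <;> field_simp <;> grind
  have hwm : mk 0 b b⁻¹ 0 (by simp [hb]) ∈ H := by
    rw [hw]; exact mul_mem (mul_mem (hl _) hh) (hl _)
  have key : up t = mk 0 b b⁻¹ 0 (by simp [hb]) * low (t / b ^ 2) * mk 0 b b⁻¹ 0 (by simp [hb]) := by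
    apply ext4 <;> simp only [mul_e, low, up, mk_e00, mk_e01, mk_e10, mk_e11] <;> field_simp <;> grind
  rw [key]
  exact mul_mem (mul_mem hwm (hl _)) hwm

lemma gen_low [Finite F] {H : Subgroup SL(2, F)} (hT : ∀ s (hs : s ≠ 0), dg s hs ∈ H)
    {s₀ : F} (hs0 : s₀ ≠ 0) (hs1 : s₀ ≠ 1) {h : SL(2, F)} (hh : h ∈ H)
    (ha : h 0 0 = 0) (hd : h 1 1 ≠ 0) (t : F) : low t ∈ H := by
  have h2 : (2 : F) = 0 := two_zero
  have hdet := det_e h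
  have hc : h 1 0 ≠ 0 := by
    intro h0; rw [ha, h0] at hdet; simp at hdet
  refine low_mem_of hT (u := h 1 0 * h 1 1 * (s₀ + s₀⁻¹) / s₀) ?_ ?_ t
  · have : s₀ + s₀⁻¹ ≠ 0 := by
      intro h0
      apply hs1
      field_simp at h0
      have : (s₀ + 1) ^ 2 = 0 := by grind
      have := pow_eq_zero_iff (two_ne_zero) |>.mp this
      grind
    positivity
  · have key : low (h 1 0 * h 1 1 * (s₀ + s₀⁻¹) / s₀) = dg s₀ hs0 * (h * dg s₀ hs0 * h⁻¹) := by
      apply ext4 <;> simp only [mul_e, low, dg, inv_e00, inv_e01, inv_e10, inv_e11,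
        mk_e00, mk_e01, mk_e10, mk_e11] <;> field_simp <;> grind
    rw [key]
    exact mul_mem (hT _ _) (mul_mem (mul_mem hh (hT _ _)) (inv_mem hh))

lemma gen_all [Finite F] {H : Subgroup SL(2, F)} (hT : ∀ s (hs : s ≠ 0), dg s hs ∈ H)
    {s₀ : F} (hs0 : s₀ ≠ 0) (hs1 : s₀ ≠ 1) {h : SL(2, F)} (hh : h ∈ H)
    (hb : h 0 1 ≠ 0) (hc : h 1 0 ≠ 0) (had : h 0 0 ≠ 0 ∨ h 1 1 ≠ 0) : H = ⊤ := by
  have h2 : (2 : F) = 0 := two_zero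
  have hdet := det_e h
  have hlow : ∀ t, low t ∈ H := by
    by_cases ha : h 0 0 = 0
    · exact gen_low hT hs0 hs1 hh ha (by tauto)
    by_cases hd : h 1 1 = 0
    · refine gen_low hT hs0 hs1 (inv_mem hh) ?_ ?_
      · rwa [inv_e00]
      · rwa [inv_e11]
    obtain ⟨s, hs⟩ := FiniteField.isSquare_of_char_two (ringChar.eq F 2)
      (h 0 1 * h 1 0 / (h 0 0 * h 1 1))
    have hs' : s * s * (h 0 0 * h 1 1) = h 0 1 * h 1 0 := by
      rw [← hs]; field_simp
    have hsn : s ≠ 0 := by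
      rintro rfl
      simp [hb, hc] at hs'
    refine gen_low hT hs0 hs1 (h := h⁻¹ * dg s hsn * h)
      (mul_mem (mul_mem (inv_mem hh) (hT _ _)) hh) ?_ ?_
    · simp only [mul_e, dg, inv_e00, inv_e01, inv_e10, inv_e11, mk_e00, mk_e01, mk_e10, mk_e11]
      field_simp
      grind
    · simp only [mul_e, dg, inv_e00, inv_e01, inv_e10, inv_e11, mk_e00, mk_e01, mk_e10, mk_e11]
      intro h0
      field_simp at h0
      have e1 : s * s * (h 0 1 * h 1 0) = h 0 0 * h 1 1 := by grind
      have e2 : (h 0 0 * h 1 1 + h 0 1 * h 1 0) * (h 0 0 * h 1 1 + h 0 1 * h 1 0) = 0 := by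
        grind
      rw [hdet] at e2
      simp at e2
  exact eq_top_of_up_low (up_mem_of_low hlow hh hb) hlow

lemma exists_conj_comp [Finite F] (g : SL(2, F)) (hg : tr g ≠ 0) :
    ∃ u : SL(2, F), u * g * u⁻¹ = mk 0 1 1 (tr g) (by simp) := by
  have h2 : (2 : F) = 0 := two_zero
  have hdet := det_e g
  have main : ∀ v w : F, v * (g 1 0 * v + g 1 1 * w) + w * (g 0 0 * v + g 0 1 * w) ≠ 0 →
      ∃ u : SL(2, F), u * g * u⁻¹ = mk 0 1 1 (tr g) (by simp) := by
    intro v w hD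
    obtain ⟨r, hr⟩ := FiniteField.isSquare_of_char_two (ringChar.eq F 2)
      (v * (g 1 0 * v + g 1 1 * w) + w * (g 0 0 * v + g 0 1 * w))⁻¹
    have hr' : r * r * (v * (g 1 0 * v + g 1 1 * w) + w * (g 0 0 * v + g 0 1 * w)) = 1 := by
      rw [← hr]; exact inv_mul_cancel₀ hD
    let u : SL(2, F) := mk (r * v) (r * (g 0 0 * v + g 0 1 * w)) (r * w)
      (r * (g 1 0 * v + g 1 1 * w)) (by linear_combination hr')
    refine ⟨u⁻¹, ?_⟩
    rw [inv_inv, mul_assoc, inv_mul_eq_iff_eq_mul]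
    apply ext4 <;> simp only [mul_e, tr, u, mk_e00, mk_e01, mk_e10, mk_e11] <;> grind
  by_cases hc : g 1 0 = 0
  · by_cases hb : g 0 1 = 0
    · refine main 1 1 ?_
      rw [hc, hb]
      unfold tr at hg
      intro h0; apply hg; linear_combination h0
    · refine main 0 1 ?_
      simpa using hb
  · refine main 1 0 ?_
    simpa using hc

lemma exists_conj [Finite F] {g h : SL(2, F)} (hg : tr g ≠ 0) (hgh : tr g = tr h) :
    ∃ u : SL(2, F), u * g * u⁻¹ = h := by
  obtain ⟨u, hu⟩ := exists_conj_comp g hg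
  obtain ⟨v, hv⟩ := exists_conj_comp h (hgh ▸ hg)
  refine ⟨v⁻¹ * u, ?_⟩
  have : u * g * u⁻¹ = v * h * v⁻¹ := by rw [hu, hv]; congr
  calc v⁻¹ * u * g * (v⁻¹ * u)⁻¹ = v⁻¹ * (u * g * u⁻¹) * v := by group
    _ = h := by rw [this]; group

lemma orderOf_eq_of_tr [Finite F] {g h : SL(2, F)} (hg : tr g ≠ 0) (hgh : tr g = tr h) :
    orderOf g = orderOf h := by
  obtain ⟨u, rfl⟩ := exists_conj hg hgh
  have : SemiconjBy u g (u * g * u⁻¹) := by simp [SemiconjBy]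
  exact this.orderOf_eq

/-- traces of elements without eigenvectors -/
def IrrTr (β : F) : Prop := ∀ r : F, r * r + β * r + 1 ≠ 0

lemma IrrTr.ne_zero {β : F} (h : IrrTr β) : β ≠ 0 := by
  rintro rfl
  have h2 : (2 : F) = 0 := two_zero
  apply h 1
  linear_combination h2

lemma IrrTr.entries {g : SL(2, F)} (h : IrrTr (tr g)) : g 0 1 ≠ 0 ∧ g 1 0 ≠ 0 := by
  have h2 : (2 : F) = 0 := two_zero
  have hdet := det_e g
  constructor
  · intro h0
    apply h (g 0 0)
    unfold tr
    grind
  · intro h0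
    apply h (g 0 0)
    unfold tr
    grind

lemma dg_pow (s : F) (hs : s ≠ 0) (n : ℕ) : dg s hs ^ n = dg (s ^ n) (pow_ne_zero n hs) := by
  induction n with
  | zero =>
    apply ext4 <;> simp [dg, mk_e00, mk_e01, mk_e10, mk_e11]
  | succ n ih =>
    rw [pow_succ, ih]
    apply ext4 <;> simp only [mul_e, dg, mk_e00, mk_e01, mk_e10, mk_e11] <;> field_simp <;> ring

lemma tr_dg (s : F) (hs : s ≠ 0) : tr (dg s hs) = s + s⁻¹ := rfl

lemma add_inv_ne_zero {s : F} (hs : s ≠ 0) (hs1 : s ≠ 1) : s + s⁻¹ ≠ 0 := by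
  have h2 : (2 : F) = 0 := two_zero
  intro h0
  apply hs1
  field_simp at h0
  have : (s + 1) ^ 2 = 0 := by grind
  have := pow_eq_zero_iff (two_ne_zero) |>.mp this
  grind

lemma gen_of_traces [Finite F] {H : Subgroup SL(2, F)} {lam : F} (hl0 : lam ≠ 0) (hl1 : lam ≠ 1)
    (hgen : ∀ s : F, s ≠ 0 → ∃ n : ℕ, lam ^ n = s) {g y : SL(2, F)} (hg : g ∈ H) (hy : y ∈ H)
    (htg : tr g = lam + lam⁻¹) (hty : IrrTr (tr y)) : H = ⊤ := by
  obtain ⟨u, hu⟩ := exists_conj (g := g) (h := dg lam hl0)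
    (by rw [htg]; exact add_inv_ne_zero hl0 hl1) (by rw [htg, tr_dg])
  have hK : H.map (MulAut.conj u).toMonoidHom = ⊤ := by
    have hy' : IrrTr (tr (u * y * u⁻¹)) := by rwa [tr_conj]
    refine gen_all (h := u * y * u⁻¹) ?_ hl0 hl1
      (Subgroup.mem_map.mpr ⟨y, hy, rfl⟩) hy'.entries.1 hy'.entries.2 ?_
    · intro s hs
      obtain ⟨n, rfl⟩ := hgen s hs
      rw [← dg_pow lam hl0]
      have hm : dg lam hl0 ∈ H.map (MulAut.conj u).toMonoidHom := Subgroup.mem_map.mpr ⟨g, hg, hu⟩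
      exact pow_mem hm n
    · by_contra hcon
      push Not at hcon
      apply hy'.ne_zero
      unfold tr
      rw [hcon.1, hcon.2, add_zero]
  rw [eq_top_iff]
  intro z _
  have : u * z * u⁻¹ ∈ H.map (MulAut.conj u).toMonoidHom := by rw [hK]; trivial
  obtain ⟨w, hw, e⟩ := this
  have e : u * w * u⁻¹ = u * z * u⁻¹ := e
  have : w = z := by simpa using e
  exact this ▸ hw

end sl_two

end BV

namespace BV

open Matrix Matrix.SpecialLinearGroup

section orders

variable {F : Type*} [Field F] [CharP F 2]

lemma tr_sq (g : SL(2, F)) : tr (g ^ 2) = tr g ^ 2 := by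
  have h2 : (2 : F) = 0 := two_zero
  have hd := det_e g
  rw [pow_two]
  simp only [tr, mul_e]
  grind

lemma tr_pow (g : SL(2, F)) (e : ℕ) : tr (g ^ 2 ^ e) = tr g ^ 2 ^ e := by
  induction e with
  | zero => simp
  | succ n ih => rw [pow_succ, pow_mul, tr_sq, ih, ← pow_mul]

lemma sq_of_tr {g : SL(2, F)} (h : tr g = 0) : g ^ 2 = 1 := by
  have h2 : (2 : F) = 0 := two_zero
  have hd := det_e g
  unfold tr at h
  rw [pow_two]
  apply ext4 <;> simp only [mul_e, one_e00, one_e01, one_e10, one_e11] <;> grind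

lemma pow_form (g : SL(2, F)) (n : ℕ) : ∃ p r : F, (g ^ n) 0 0 = p * g 0 0 + r ∧
    (g ^ n) 1 1 = p * g 1 1 + r ∧ (g ^ n) 0 1 = p * g 0 1 ∧ (g ^ n) 1 0 = p * g 1 0 := by
  have h2 : (2 : F) = 0 := two_zero
  have hd := det_e g
  induction n with
  | zero => exact ⟨0, 1, by simp, by simp, by simp, by simp⟩
  | succ n ih =>
    obtain ⟨p, r, h00, h11, h01, h10⟩ := ih
    refine ⟨p * tr g + r, p, ?_⟩
    rw [pow_succ]
    simp only [mul_e, h00, h11, h01, h10, tr]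
    refine ⟨?_, ?_, ?_, ?_⟩ <;> grind

lemma pow_q {g : SL(2, F)} {e : ℕ} (hq : Nat.card F = 2 ^ e) (h : tr g ≠ 0) [Finite F] :
    g ^ 2 ^ e = g ∨ g ^ 2 ^ e = g⁻¹ := by
  have h2 : (2 : F) = 0 := two_zero
  have hd := det_e g
  have ht := tr_pow g e
  have hfr : tr g ^ 2 ^ e = tr g := by
    cases nonempty_fintype F
    rw [← hq, Nat.card_eq_fintype_card, FiniteField.pow_card]
  rw [hfr] at ht
  obtain ⟨p, r, h00, h11, h01, h10⟩ := pow_form g (2 ^ e)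
  have hd' := det_e (g ^ 2 ^ e)
  unfold tr at ht
  rw [h00, h11] at ht
  have hp : p = 1 := by
    have : (p + 1) * tr g = 0 := by unfold tr; grind
    rcases mul_eq_zero.mp this with h' | h'
    · grind
    · exact absurd h' h
  subst hp
  rw [h00, h11, h01, h10] at hd'
  have : r * (r + tr g) = 0 := by unfold tr; grind
  rcases mul_eq_zero.mp this with h' | h'
  · left
    subst h'
    apply ext4
    · rw [h00]; ring
    · rw [h01]; ring
    · rw [h10]; ring
    · rw [h11]; ring
  · right
    unfold tr at h'
    apply ext4
    · rw [h00, inv_e00]; grind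
    · rw [h01, inv_e01]; ring
    · rw [h10, inv_e10]; ring
    · rw [h11, inv_e11]; grind

lemma hord_all [Finite F] {e : ℕ} (hq : Nat.card F = 2 ^ e) (g : SL(2, F)) :
    g ^ 2 = 1 ∨ g ^ (2 ^ e - 1) = 1 ∨ g ^ (2 ^ e + 1) = 1 := by
  by_cases h : tr g = 0
  · exact Or.inl (sq_of_tr h)
  rcases pow_q hq h with h' | h'
  · right; left
    have : 0 < 2 ^ e := by positivity
    have e1 : 2 ^ e = (2 ^ e - 1) + 1 := by omega
    rw [e1, pow_succ] at h'
    simpa using h'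
  · right; right
    rw [pow_succ, h']; simp

lemma irr_pow [Finite F] {e : ℕ} (hq : Nat.card F = 2 ^ e) {g : SL(2, F)} (h : IrrTr (tr g)) :
    g ^ (2 ^ e + 1) = 1 := by
  have h2 : (2 : F) = 0 := two_zero
  have hd := det_e g
  rcases pow_q hq h.ne_zero with h' | h'
  · exfalso
    let φ : Polynomial F →* F := (Matrix.detMonoidHom).comp
      ((Polynomial.aeval (R := F) (g : Matrix (Fin 2) (Fin 2) F)).toRingHom.toMonoidHom)
    have hs : (Polynomial.X ^ (Nat.card F) - Polynomial.X : Polynomial F).Splits :=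
      Polynomial.splits_X_pow_nat_card_sub_X
    have h0 : φ (Polynomial.X ^ (Nat.card F) - Polynomial.X) = 0 := by
      have : (g : Matrix (Fin 2) (Fin 2) F) ^ (2 ^ e) = g := by
        rw [← coe_pow, h']
      simp [φ, hq, this]
    rw [hs.eq_prod_roots, map_mul, map_multiset_prod, mul_eq_zero, Multiset.prod_eq_zero_iff] at h0
    rcases h0 with h0 | h0
    · have : (Polynomial.X ^ (Nat.card F) - Polynomial.X : Polynomial F) ≠ 0 :=
        FiniteField.X_pow_card_sub_X_ne_zero F (Finite.one_lt_card)
      simp [φ, Matrix.det_fin_two, Polynomial.aeval_C, Matrix.algebraMap_matrix_apply] at h0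
      exact this h0
    · simp only [Multiset.mem_map] at h0
      obtain ⟨_, ⟨a, _, rfl⟩, h0⟩ := h0
      apply h a
      simp [φ, Matrix.det_fin_two, Polynomial.aeval_C, Matrix.algebraMap_matrix_apply] at h0
      unfold tr
      grind
  · rw [pow_succ, h']; simp

lemma order_of_unit [Finite F] {e : ℕ} (hq : Nat.card F = 2 ^ e) :
    ∃ T : SL(2, F), orderOf T = 2 ^ e + 1 := by
  cases nonempty_fintype F
  let K := FiniteField.Extension F 2 2
  have hK : Nat.card K = (2 ^ e) ^ 2 := by rw [FiniteField.natCard_extension, hq]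
  have : Finite K := inferInstance
  have hfr : Module.finrank F K = 2 := FiniteField.finrank_extension F 2 2
  let b := Module.finBasisOfFinrankEq F K hfr
  obtain ⟨w, hw⟩ := IsCyclic.exists_generator (α := Kˣ)
  have hwo : orderOf w = (2 ^ e) ^ 2 - 1 := by
    rw [orderOf_eq_card_of_forall_mem_zpowers hw, Nat.card_units, hK]
  have hpos : 1 ≤ 2 ^ e := Nat.one_le_two_pow
  have hfac : (2 ^ e) ^ 2 - 1 = (2 ^ e - 1) * (2 ^ e + 1) := by
    obtain ⟨n, hn⟩ := Nat.exists_eq_add_of_le hpos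
    rw [hn]
    have : (1 + n) ^ 2 = n * (1 + n + 1) + 1 := by ring
    rw [this]; simp
  have hw2 : orderOf (w ^ (2 ^ e - 1)) = 2 ^ e + 1 := by
    have hlt : 0 < 2 ^ e - 1 := by
      have : 0 < orderOf w := orderOf_pos w
      rw [hwo, hfac] at this
      exact Nat.pos_of_mul_pos_right this
    rw [orderOf_pow_of_dvd hlt.ne' (by rw [hwo, hfac]; exact dvd_mul_right _ _), hwo, hfac]
    exact Nat.mul_div_cancel_left _ hlt
  let M := Algebra.leftMulMatrix b ((w : Kˣ) : K)
  have hM : M.det ≠ 0 := by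
    have : M * Algebra.leftMulMatrix b ((w⁻¹ : Kˣ) : K) = 1 := by
      rw [← map_mul, Units.mul_inv, map_one]
    have h' := congrArg Matrix.det this
    rw [Matrix.det_mul, Matrix.det_one] at h'
    exact left_ne_zero_of_mul_eq_one h'
  let T : SL(2, F) := ⟨M ^ (2 ^ e - 1), by
    rw [Matrix.det_pow, ← hq, Nat.card_eq_fintype_card, FiniteField.pow_card_sub_one_eq_one _ hM]⟩
  refine ⟨T, ?_⟩
  rw [← hw2]
  rw [orderOf_eq_orderOf_iff]
  intro n
  have e1 : T ^ n = 1 ↔ Algebra.leftMulMatrix b (((w ^ (2 ^ e - 1)) ^ n : Kˣ) : K) = 1 := by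
    have e0 : T ^ n = 1 ↔ ((T ^ n : SL(2, F)) : Matrix (Fin 2) (Fin 2) F) = (1 : SL(2, F)) :=
      Subtype.ext_iff
    rw [e0, coe_pow]
    simp [T, M]
  rw [e1, ← map_one (Algebra.leftMulMatrix b), (Algebra.leftMulMatrix_injective b).eq_iff,
    Units.val_eq_one]

lemma card_gt {e : ℕ} (he : 2 ≤ e) : 4 ≤ 2 ^ e := by
  calc 4 = 2 ^ 2 := rfl
    _ ≤ 2 ^ e := Nat.pow_le_pow_right (by norm_num) he

lemma exists_tau [Finite F] {e : ℕ} (hq : Nat.card F = 2 ^ e) (he : 2 ≤ e) :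
    ∃ τ : F, IrrTr τ ∧ ∀ g : SL(2, F), tr g = τ → orderOf g = 2 ^ e + 1 := by
  have h2 : (2 : F) = 0 := two_zero
  have h4 := card_gt he
  obtain ⟨T, hT⟩ := order_of_unit hq
  have ht0 : tr T ≠ 0 := by
    intro h
    have := orderOf_dvd_of_pow_eq_one (sq_of_tr h)
    rw [hT] at this
    have := Nat.le_of_dvd (by norm_num) this
    omega
  refine ⟨tr T, ?_, fun g hg => ?_⟩
  · intro r hr
    have hr0 : r ≠ 0 := by
      rintro rfl
      simp at hr
    have htr : tr T = tr (dg r hr0) := by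
      rw [tr_dg]
      field_simp
      grind
    have ho := orderOf_eq_of_tr ht0 htr
    have hd : orderOf (dg r hr0) ∣ 2 ^ e - 1 := by
      apply orderOf_dvd_of_pow_eq_one
      rw [dg_pow]
      have : r ^ (2 ^ e - 1) = 1 := by
        cases nonempty_fintype F
        rw [← hq, Nat.card_eq_fintype_card, FiniteField.pow_card_sub_one_eq_one _ hr0]
      apply ext4 <;> simp [dg, mk_e00, mk_e01, mk_e10, mk_e11, this]
    rw [← ho, hT] at hd
    have := Nat.le_of_dvd (by omega) hd
    omega
  · rw [← hT]
    exact orderOf_eq_of_tr (hg ▸ ht0) hg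

lemma orderOf_dg (s : F) (hs : s ≠ 0) : orderOf (dg s hs) = orderOf s := by
  rw [orderOf_eq_orderOf_iff]
  intro n
  rw [dg_pow]
  constructor
  · intro h
    have := congrArg (fun g : SL(2, F) => g 0 0) h
    simpa [dg, mk_e00] using this
  · intro h
    apply ext4 <;> simp [dg, mk_e00, mk_e01, mk_e10, mk_e11, h]

/-- A generator of the multiplicative group. -/
lemma exists_lam [Finite F] {e : ℕ} (hq : Nat.card F = 2 ^ e) :
    ∃ lam : F, lam ≠ 0 ∧ orderOf lam = 2 ^ e - 1 ∧ ∀ s : F, s ≠ 0 → ∃ n : ℕ, lam ^ n = s := by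
  obtain ⟨w, hw⟩ := IsCyclic.exists_generator (α := Fˣ)
  refine ⟨w, w.ne_zero, ?_, ?_⟩
  · rw [orderOf_units, orderOf_eq_card_of_forall_mem_zpowers hw, Nat.card_units, hq]
  · classical
    intro s hs
    have := hw (Units.mk0 s hs)
    rw [mem_zpowers_iff_mem_range_orderOf] at this
    simp only [Finset.mem_image] at this
    obtain ⟨n, -, hn⟩ := this
    refine ⟨n, ?_⟩
    rw [← Units.val_pow_eq_pow_val, hn, Units.val_mk0]

end orders

end BV

namespace BV

open Matrix Matrix.SpecialLinearGroup

section types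

variable {F : Type*} [Field F] [CharP F 2] [Finite F]

lemma exists_pair {lam : F} (h0 : lam ≠ 0) (h1 : lam ≠ 1) (β γ : F) :
    ∃ y : SL(2, F), tr y = β ∧ tr (dg lam h0 * y) = γ ∧ y 0 1 = 1 := by
  have h2 : (2 : F) = 0 := two_zero
  have hα := add_inv_ne_zero h0 h1
  set a := (γ + β * lam⁻¹) / (lam + lam⁻¹) with ha
  have ha' : a * (lam + lam⁻¹) = γ + β * lam⁻¹ := by
    rw [ha]; exact div_mul_cancel₀ _ hα
  refine ⟨mk a 1 (a * (β + a) + 1) (β + a) (by grind), ?_, ?_, rfl⟩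
  · simp only [tr, mk_e00, mk_e11]; grind
  · simp only [tr, mul_e, dg, mk_e00, mk_e11, mk_e01, mk_e10]; grind

lemma ne_one_of_order {lam : F} {e : ℕ} (he : 2 ≤ e) (ho : orderOf lam = 2 ^ e - 1) : lam ≠ 1 := by
  rintro rfl
  have := card_gt he
  rw [orderOf_one] at ho
  omega

lemma order_dg_tr {lam : F} {e : ℕ} (h0 : lam ≠ 0) (h1 : lam ≠ 1)
    (ho : orderOf lam = 2 ^ e - 1) {g : SL(2, F)} (hg : tr g = lam + lam⁻¹) :
    orderOf g = 2 ^ e - 1 := by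
  rw [← ho, ← orderOf_dg lam h0]
  apply orderOf_eq_of_tr
  · rw [hg]; exact add_inv_ne_zero h0 h1
  · rw [hg, tr_dg]

lemma gen_dg {lam : F} {e : ℕ} (he : 2 ≤ e) (h0 : lam ≠ 0) (ho : orderOf lam = 2 ^ e - 1)
    (hgen : ∀ s : F, s ≠ 0 → ∃ n : ℕ, lam ^ n = s)
    {y : SL(2, F)} (hb : y 0 1 ≠ 0) (hc : y 1 0 ≠ 0) (had : y 0 0 ≠ 0 ∨ y 1 1 ≠ 0) :
    Subgroup.closure {dg lam h0, y} = ⊤ := by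
  refine gen_all ?_ h0 (ne_one_of_order he ho) (mem_closure_pair_right (dg lam h0) y) hb hc had
  intro s hs
  obtain ⟨n, rfl⟩ := hgen s hs
  rw [← dg_pow lam h0]
  exact pow_mem (mem_closure_pair_left _ _) n

lemma order_two_of {y : SL(2, F)} (ht : tr y = 0) (h1 : y ≠ 1) : orderOf y = 2 :=
  orderOf_eq_prime (sq_of_tr ht) h1

lemma ne_one_of_entry {y : SL(2, F)} (h1 : y 0 1 ≠ 0) : y ≠ 1 := by
  rintro rfl
  exact h1 one_e01

lemma typeA {e : ℕ} (hq : Nat.card F = 2 ^ e) (he : 2 ≤ e) : HasType SL(2, F) (2 ^ e - 1) (2 ^ e - 1) (2 ^ e + 1) := by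
  obtain ⟨lam, h0, ho, hgen⟩ := exists_lam hq
  have h1 := ne_one_of_order he ho
  obtain ⟨τ, hτ, hτo⟩ := exists_tau hq he
  obtain ⟨y, hy, hxy, -⟩ := exists_pair h0 h1 (lam + lam⁻¹) τ
  refine ⟨dg lam h0, y, ?_, ?_, ?_, ?_⟩
  · exact gen_of_traces h0 h1 hgen (mem_closure_pair_left _ _)
      (mul_mem (mem_closure_pair_left _ _) (mem_closure_pair_right _ _)) (tr_dg _ _) (hxy ▸ hτ)
  · rw [orderOf_dg, ho]
  · exact order_dg_tr h0 h1 ho hy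
  · exact hτo _ hxy

lemma typeB {e : ℕ} (hq : Nat.card F = 2 ^ e) (he : 2 ≤ e) : HasType SL(2, F) (2 ^ e - 1) (2 ^ e + 1) (2 ^ e + 1) := by
  obtain ⟨lam, h0, ho, hgen⟩ := exists_lam hq
  have h1 := ne_one_of_order he ho
  obtain ⟨τ, hτ, hτo⟩ := exists_tau hq he
  obtain ⟨y, hy, hxy, -⟩ := exists_pair h0 h1 τ τ
  refine ⟨dg lam h0, y, ?_, ?_, ?_, ?_⟩
  · exact gen_of_traces h0 h1 hgen (mem_closure_pair_left _ _)
      (mul_mem (mem_closure_pair_left _ _) (mem_closure_pair_right _ _)) (tr_dg _ _) (hxy ▸ hτ)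
  · rw [orderOf_dg, ho]
  · exact hτo _ hy
  · exact hτo _ hxy

lemma typeC {e : ℕ} (hq : Nat.card F = 2 ^ e) (he : 2 ≤ e) : HasType SL(2, F) (2 ^ e - 1) 2 (2 ^ e + 1) := by
  obtain ⟨lam, h0, ho, hgen⟩ := exists_lam hq
  have h1 := ne_one_of_order he ho
  obtain ⟨τ, hτ, hτo⟩ := exists_tau hq he
  obtain ⟨y, hy, hxy, hy1⟩ := exists_pair h0 h1 0 τ
  refine ⟨dg lam h0, y, ?_, ?_, ?_, ?_⟩
  · exact gen_of_traces h0 h1 hgen (mem_closure_pair_left _ _)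
      (mul_mem (mem_closure_pair_left _ _) (mem_closure_pair_right _ _)) (tr_dg _ _) (hxy ▸ hτ)
  · rw [orderOf_dg, ho]
  · exact order_two_of hy (ne_one_of_entry (by rw [hy1]; exact one_ne_zero))
  · exact hτo _ hxy

lemma alpha_ne_one {e : ℕ} (he3 : 3 ≤ e) {lam : F} (h0 : lam ≠ 0) (ho : orderOf lam = 2 ^ e - 1) :
    lam + lam⁻¹ + 1 ≠ 0 := by
  have h2 : (2 : F) = 0 := two_zero
  intro h
  field_simp at h
  have h3 : lam ^ 3 = 1 := by grind
  have hd := orderOf_dvd_of_pow_eq_one h3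
  rw [ho] at hd
  have := Nat.le_of_dvd (by norm_num) hd
  have : 2 ^ 3 ≤ 2 ^ e := Nat.pow_le_pow_right (by norm_num) he3
  omega

lemma typeD {e : ℕ} (hq : Nat.card F = 2 ^ e) (he : 2 ≤ e) (he3 : 3 ≤ e) : HasType SL(2, F) (2 ^ e - 1) 2 (2 ^ e - 1) := by
  have h2 : (2 : F) = 0 := two_zero
  obtain ⟨lam, h0, ho, hgen⟩ := exists_lam hq
  have h1 := ne_one_of_order he ho
  have hα := add_inv_ne_zero h0 h1
  have hα1 := alpha_ne_one he3 h0 ho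
  set α := lam + lam⁻¹ with hα'
  let y : SL(2, F) := mk α 1 (α * α + 1) α (by grind)
  have hc : y 1 0 ≠ 0 := by
    change α * α + 1 ≠ 0
    intro h
    have : (α + 1) * (α + 1) = 0 := by grind
    exact hα1 (mul_self_eq_zero.mp this)
  have hb : y 0 1 ≠ 0 := one_ne_zero
  refine ⟨dg lam h0, y, ?_, ?_, ?_, ?_⟩
  · exact gen_dg he h0 ho hgen hb hc (Or.inl hα)
  · rw [orderOf_dg, ho]
  · refine order_two_of ?_ (ne_one_of_entry hb)
    change α + α = 0
    grind
  · have ht : tr (dg lam h0 * y) = α ^ 2 := by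
      simp only [tr, mul_e, dg, y, mk_e00, mk_e11, mk_e01, mk_e10]; grind
    have ht2 : tr (dg lam h0 ^ 2) = α ^ 2 := by rw [tr_sq, tr_dg]
    rw [orderOf_eq_of_tr (by rw [ht]; exact pow_ne_zero _ hα) (ht.trans ht2.symm)]
    rw [Nat.Coprime.orderOf_pow, orderOf_dg, ho]
    rw [orderOf_dg, ho]
    have : Odd (2 ^ e - 1) := by
      refine Nat.Even.sub_odd Nat.one_le_two_pow ?_ odd_one
      exact (even_two).pow_of_ne_zero (by omega)
    exact (Nat.coprime_two_right).mpr this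

lemma pairF {e : ℕ} (hq : Nat.card F = 2 ^ e) (he : 2 ≤ e) (he3 : 3 ≤ e) : HasType SL(2, F) (2 ^ e - 1) (2 ^ e - 1) (2 ^ e - 1) := by
  have h2 : (2 : F) = 0 := two_zero
  obtain ⟨lam, h0, ho, hgen⟩ := exists_lam hq
  have h1 := ne_one_of_order he ho
  have hα := add_inv_ne_zero h0 h1
  have hα1 := alpha_ne_one he3 h0 ho
  let y : SL(2, F) := mk (1 + lam⁻¹) 1 (lam + lam⁻¹ + 1) (lam + 1) (by field_simp; grind)
  have hy : tr y = lam + lam⁻¹ := by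
    simp only [tr, y, mk_e00, mk_e11]; grind
  have hxy : tr (dg lam h0 * y) = lam + lam⁻¹ := by
    simp only [tr, mul_e, dg, y, mk_e00, mk_e11, mk_e01, mk_e10]; field_simp; grind
  refine ⟨dg lam h0, y, ?_, ?_, ?_, ?_⟩
  · refine gen_dg he h0 ho hgen one_ne_zero hα1 (Or.inr ?_)
    change lam + 1 ≠ 0
    intro h; apply h1; grind
  · rw [orderOf_dg, ho]
  · exact order_dg_tr h0 h1 ho hy
  · exact order_dg_tr h0 h1 ho hxy

lemma exists_two_irr {δ : F} {μ : F} (hμ : μ ≠ 0) (hδ : δ = μ + μ⁻¹) :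
    ∃ β : F, IrrTr β ∧ IrrTr (β + δ) := by
  classical
  have h2 : (2 : F) = 0 := two_zero
  by_contra hcon
  push Not at hcon
  have hB : ∀ β : F, ¬ IrrTr β → ∃ r, r * r + β * r + 1 = 0 := by
    intro β hβ
    unfold IrrTr at hβ
    push Not at hβ
    exact hβ
  let ρ : F → F := fun β => if h : IrrTr β then 0 else (hB β h).choose
  have hρ : ∀ β, ¬ IrrTr β → ρ β * ρ β + β * ρ β + 1 = 0 := by
    intro β h
    simp only [ρ, dif_neg h]
    exact (hB β h).choose_spec
  have hρ0 : ∀ β, ¬ IrrTr β → ρ β ≠ 0 := by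
    intro β h h0
    have := hρ β h
    rw [h0] at this
    simp at this
  have hρβ : ∀ β, ¬ IrrTr β → β = ρ β + (ρ β)⁻¹ := by
    intro β h
    have := hρ β h
    have := hρ0 β h
    field_simp
    grind
  have h0B : ¬ IrrTr (0 : F) := fun h => h.ne_zero rfl
  have hδB : ¬ IrrTr δ := by
    intro h
    apply h μ
    rw [hδ]; field_simp; grind
  let f : F → F := fun x => if IrrTr x then (ρ (x + δ))⁻¹ else ρ x
  have hf0 : ∀ x, f x ≠ 0 := by
    intro x
    by_cases hx : IrrTr x
    · simp only [f, if_pos hx]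
      exact inv_ne_zero (hρ0 _ (hcon x hx))
    · simp only [f, if_neg hx]
      exact hρ0 _ hx
  have hmix : ∀ x y, IrrTr x → ¬ IrrTr y → f x ≠ f y := by
    intro x y hx hy h
    simp only [f, if_pos hx, if_neg hy] at h
    have e1 := hρβ _ (hcon x hx)
    have e2 := hρβ _ hy
    have e3 : x + δ = y := by
      rw [e1, e2, ← h, inv_inv, add_comm]
    rw [e3] at h
    have e4 : y = 0 := by
      rw [e2, h]; grind
    apply hδB
    have : x = δ := by grind
    exact this ▸ hx
  have hinj : Function.Injective f := by
    intro x y h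
    by_cases hx : IrrTr x <;> by_cases hy : IrrTr y
    · simp only [f, if_pos hx, if_pos hy] at h
      have h := inv_injective h
      have e1 := hρβ _ (hcon x hx)
      have e2 := hρβ _ (hcon y hy)
      rw [h, ← e2] at e1
      exact add_right_cancel e1
    · exact absurd h (hmix x y hx hy)
    · exact absurd h.symm (hmix y x hy hx)
    · simp only [f, if_neg hx, if_neg hy] at h
      rw [hρβ x hx, hρβ y hy, h]
  obtain ⟨x, hx⟩ := Finite.surjective_of_injective hinj 0
  exact hf0 x hx

lemma pairE {e : ℕ} (hq : Nat.card F = 2 ^ e) (he : 2 ≤ e) :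
    ∃ x y : SL(2, F), Subgroup.closure {x, y} = ⊤ ∧ x ^ 2 = 1 ∧ x ≠ 1 ∧
      y ^ (2 ^ e + 1) = 1 ∧ y ≠ 1 ∧ (x * y) ^ (2 ^ e + 1) = 1 ∧ x * y ≠ 1 := by
  have h2 : (2 : F) = 0 := two_zero
  obtain ⟨lam, h0, ho, hgen⟩ := exists_lam hq
  have h1 := ne_one_of_order he ho
  obtain ⟨μ, hμ⟩ := FiniteField.isSquare_of_char_two (ringChar.eq F 2) lam
  have hμ0 : μ ≠ 0 := by
    rintro rfl
    exact h0 (by simpa using hμ)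
  have hδ2 : (μ + μ⁻¹) * (μ + μ⁻¹) = lam + lam⁻¹ := by
    rw [hμ]; field_simp; grind
  have hδ0 : μ + μ⁻¹ ≠ 0 := by
    intro h
    rw [h] at hδ2
    exact add_inv_ne_zero h0 h1 (by rw [← hδ2]; ring)
  obtain ⟨β, hβ, hβδ⟩ := exists_two_irr hμ0 rfl
  set δ := μ + μ⁻¹ with hδ
  let x : SL(2, F) := up δ
  let y : SL(2, F) := mk 0 1 1 β (by simp)
  have hty : tr y = β := by simp [tr, y, mk_e00, mk_e11]
  have htxy : tr (x * y) = β + δ := by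
    simp only [tr, x, y, up, mul_e, mk_e00, mk_e11, mk_e01, mk_e10]; ring
  have htc : tr (x * y * x⁻¹ * y⁻¹) = lam + lam⁻¹ := by
    rw [← hδ2]
    simp only [tr, x, y, up, mul_e, inv_e00, inv_e01, inv_e10, inv_e11,
      mk_e00, mk_e11, mk_e01, mk_e10]
    grind
  have hne : ∀ g : SL(2, F), IrrTr (tr g) → g ≠ 1 := by
    rintro g hg rfl
    exact hg.entries.1 one_e01
  have hx := mem_closure_pair_left x y
  have hy := mem_closure_pair_right x y
  refine ⟨x, y, ?_, ?_, ?_, ?_, ?_, ?_, ?_⟩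
  · exact gen_of_traces h0 h1 hgen
      (mul_mem (mul_mem (mul_mem hx hy) (inv_mem hx)) (inv_mem hy)) hy htc (hty ▸ hβ)
  · apply sq_of_tr
    simp only [tr, x, up, mk_e00, mk_e11]
    grind
  · exact ne_one_of_entry (by exact hδ0)
  · exact irr_pow hq (hty ▸ hβ)
  · exact hne _ (hty ▸ hβ)
  · exact irr_pow hq (htxy ▸ hβδ)
  · exact hne _ (htxy ▸ hβδ)

end types

end BV

namespace BV

open Matrix Matrix.SpecialLinearGroup

section transfer

/-- Every generating pair can be simultaneously inverted by conjugation. -/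
def InvPairs (G : Type*) [Group G] : Prop :=
  ∀ x y : G, Subgroup.closure {x, y} = ⊤ → ∃ g : G, g * x * g⁻¹ = x⁻¹ ∧ g * y * g⁻¹ = y⁻¹

lemma gen_map {G H : Type*} [Group G] [Group H] (f : G ≃* H) {x y : G}
    (h : Subgroup.closure {x, y} = ⊤) : Subgroup.closure {f x, f y} = ⊤ := by
  have := congrArg (Subgroup.map f.toMonoidHom) h
  rw [MonoidHom.map_closure, Subgroup.map_top_of_surjective _ f.surjective, Set.image_pair] at this
  exact this

lemma InvPairs.map {G H : Type*} [Group G] [Group H] (f : G ≃* H) (h : InvPairs G) :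
    InvPairs H := by
  intro x y hxy
  obtain ⟨g, h1, h2⟩ := h _ _ (gen_map f.symm hxy)
  refine ⟨f g, ?_, ?_⟩
  · have := congrArg f h1
    simpa using this
  · have := congrArg f h2
    simpa using this

lemma InvPairs.pi {S : Type*} [Group S] {ι : Type*} (h : InvPairs S) : InvPairs (ι → S) := by
  intro x y hxy
  choose g h1 h2 using fun i => h (x i) (y i) (proj_gen hxy i)
  exact ⟨g, funext h1, funext h2⟩

lemma InvPairs.stronglyReal {G : Type*} [Group G] (h : InvPairs G) {x₁ y₁ x₂ y₂ : G}
    (hB : IsBeauvilleStructure x₁ y₁ x₂ y₂) : IsStronglyRealStructure x₁ y₁ x₂ y₂ := by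
  obtain ⟨g₁, h1, h2⟩ := h _ _ hB.1
  obtain ⟨g₂, h3, h4⟩ := h _ _ hB.2.1
  exact ⟨MulEquiv.refl G, g₁, g₂, h1, h2, h3, h4⟩

lemma sigma_map {G H : Type*} [Group G] [Group H] (f : G ≃* H) (x y : G) (a : H) :
    a ∈ beauvilleSigma (f x) (f y) → f.symm a ∈ beauvilleSigma x y := by
  rintro ⟨i, g, h⟩
  refine ⟨i, f.symm g, ?_⟩
  rcases h with h | h | h
  · left; rw [h]; simp
  · right; left; rw [h]; simp
  · right; right; rw [h]; simp

lemma beauville_map {G H : Type*} [Group G] [Group H] (f : G ≃* H) {x₁ y₁ x₂ y₂ : G}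
    (hB : IsBeauvilleStructure x₁ y₁ x₂ y₂) :
    IsBeauvilleStructure (f x₁) (f y₁) (f x₂) (f y₂) := by
  refine ⟨gen_map f hB.1, gen_map f hB.2.1, ?_⟩
  ext a
  constructor
  · rintro ⟨h1, h2⟩
    have : f.symm a ∈ beauvilleSigma x₁ y₁ ∩ beauvilleSigma x₂ y₂ :=
      ⟨sigma_map f _ _ _ h1, sigma_map f _ _ _ h2⟩
    rw [hB.2.2] at this
    simpa using this
  · rintro rfl
    exact ⟨⟨0, 1, by simp⟩, ⟨0, 1, by simp⟩⟩

lemma sigma_pow {G : Type*} [Group G] {x y a : G} {n : ℕ} (hx : x ^ n = 1) (hy : y ^ n = 1)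
    (hxy : (x * y) ^ n = 1) (ha : a ∈ beauvilleSigma x y) : a ^ n = 1 := by
  obtain ⟨i, g, h⟩ := ha
  rcases h with h | h | h <;> rw [h, conj_pow, ← pow_mul, mul_comm i n, pow_mul] <;> simp [*]

end transfer

section final

variable {F : Type*} [Field F] [CharP F 2] [Finite F]

lemma coprime_two_pm {e : ℕ} (he : 2 ≤ e) : Nat.Coprime 2 (2 ^ e - 1) ∧ Nat.Coprime 2 (2 ^ e + 1) ∧
    Nat.Coprime (2 ^ e - 1) (2 ^ e + 1) := by
  have hev : Even (2 ^ e) := (even_two).pow_of_ne_zero (by omega)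
  have h4 := card_gt he
  have h1 : Odd (2 ^ e - 1) := Nat.Even.sub_odd Nat.one_le_two_pow hev odd_one
  refine ⟨Nat.coprime_two_left.mpr h1, Nat.coprime_two_left.mpr hev.add_one, ?_⟩
  have : 2 ^ e + 1 = 2 + (2 ^ e - 1) := by omega
  rw [this, Nat.coprime_add_self_right]
  exact Nat.coprime_two_right.mpr h1

lemma sl_noncomm : ∃ s t : SL(2, F), s * t ≠ t * s := by
  refine ⟨up 1, low 1, fun h => ?_⟩
  have h2 : (2 : F) = 0 := two_zero
  have := congrArg (fun g : SL(2, F) => g 0 0) h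
  simp only [mul_e, up, low, mk_e00, mk_e01, mk_e10, mk_e11] at this
  have : (1 : F) = 0 := by grind
  exact one_ne_zero this

lemma beauville_sl_one {e : ℕ} (hq : Nat.card F = 2 ^ e) (he3 : 3 ≤ e) :
    ∃ x₁ y₁ x₂ y₂ : SL(2, F), IsBeauvilleStructure x₁ y₁ x₂ y₂ := by
  have he : 2 ≤ e := by omega
  obtain ⟨x₁, y₁, hg, hx, -, hy, -, hz, -⟩ := pairE hq he
  obtain ⟨x₂, y₂, hg', hx', hy', hz'⟩ := pairF hq he he3
  refine ⟨x₁, y₁, x₂, y₂, hg, hg', ?_⟩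
  obtain ⟨c1, c2, c3⟩ := coprime_two_pm he
  ext a
  constructor
  · rintro ⟨h1, h2⟩
    have e1 : a ^ (2 * (2 ^ e + 1)) = 1 := by
      refine sigma_pow ?_ ?_ ?_ h1
      · rw [pow_mul, hx, one_pow]
      · rw [mul_comm, pow_mul, hy, one_pow]
      · rw [mul_comm, pow_mul, hz, one_pow]
    have e2 : a ^ (2 ^ e - 1) = 1 := by
      refine sigma_pow ?_ ?_ ?_ h2
      · rw [← hx']; exact pow_orderOf_eq_one _
      · rw [← hy']; exact pow_orderOf_eq_one _
      · rw [← hz']; exact pow_orderOf_eq_one _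
    have hc : Nat.Coprime (2 * (2 ^ e + 1)) (2 ^ e - 1) := Nat.Coprime.mul_left c1 c3.symm
    exact orderOf_eq_one_iff.mp (Nat.eq_one_of_dvd_coprimes hc (orderOf_dvd_of_pow_eq_one e1)
      (orderOf_dvd_of_pow_eq_one e2))
  · rintro rfl
    exact ⟨⟨0, 1, by simp⟩, ⟨0, 1, by simp⟩⟩

lemma beauville_sl {e k : ℕ} (hq : Nat.card F = 2 ^ e) (he : 2 ≤ e) (hk : 1 ≤ k)
    (hqk : ((2 : ℕ) ^ e, k) ≠ (4, 1)) [IsSimpleGroup SL(2, F)]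
    (h2gen : ∃ a b : Fin k → SL(2, F), Subgroup.closure {a, b} = ⊤) :
    ∃ x₁ y₁ x₂ y₂ : Fin k → SL(2, F), IsBeauvilleStructure x₁ y₁ x₂ y₂ := by
  obtain ⟨c1, c2, c3⟩ := coprime_two_pm he
  have h4 := card_gt he
  rcases Nat.lt_or_ge 2 e with he3 | he2
  · rcases Nat.lt_or_ge 1 k with hk2 | hk1
    · exact exists_beauville sl_noncomm (a := 2 ^ e - 1) (b := 2 ^ e + 1) (by omega) (by omega)
        c1 c2 c3 (hord_all hq) (typeD hq he he3).swap12 (typeA hq he) (typeB hq he)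
        (typeC hq he).swap12 hk2 h2gen
    · obtain rfl : k = 1 := by omega
      obtain ⟨x₁, y₁, x₂, y₂, h⟩ := beauville_sl_one hq he3
      exact ⟨_, _, _, _, beauville_map (MulEquiv.funUnique (Fin 1) SL(2, F)).symm h⟩
  · obtain rfl : e = 2 := by omega
    have hk2 : 2 ≤ k := by
      rcases Nat.lt_or_ge 1 k with h | h
      · exact h
      · exfalso; apply hqk
        have : k = 1 := by omega
        rw [this]; norm_num
    have t1 : HasType SL(2, F) 2 5 5 := by
      obtain ⟨x, y, hg, hx, hx1, hy, hy1, hz, hz1⟩ := pairE hq he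
      have : Fact (Nat.Prime 5) := ⟨by norm_num⟩
      exact ⟨x, y, hg, orderOf_eq_prime hx hx1, orderOf_eq_prime hy hy1, orderOf_eq_prime hz hz1⟩
    have tA : HasType SL(2, F) 3 3 5 := typeA hq he
    have tB : HasType SL(2, F) 3 5 5 := typeB hq he
    have tC : HasType SL(2, F) 3 2 5 := typeC hq he
    refine exists_beauville sl_noncomm (a := 5) (b := 3) (by omega) (by omega)
      (by norm_num) (by norm_num) (by norm_num) (fun g => ?_) t1 tB.swap12.swap23
      tA.swap23.swap12 tC.swap12.swap23 hk2 h2gen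
    have h := hord_all hq g
    have h : g ^ 2 = 1 ∨ g ^ 3 = 1 ∨ g ^ 5 = 1 := h
    tauto

lemma invPairs_sl : InvPairs SL(2, F) := by
  have h2 : (2 : F) = 0 := two_zero
  intro x y hxy
  have hdx := det_e x
  have hdy := det_e y
  obtain ⟨p, hp⟩ : ∃ p, p = x 0 1 * y 1 0 + y 0 1 * x 1 0 := ⟨_, rfl⟩
  obtain ⟨q, hq⟩ : ∃ q, q = x 0 0 * y 0 1 + x 0 1 * y 1 1 + y 0 0 * x 0 1 + y 0 1 * x 1 1 := ⟨_, rfl⟩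
  obtain ⟨r, hr⟩ : ∃ r, r = x 1 0 * y 0 0 + x 1 1 * y 1 0 + y 1 0 * x 0 0 + y 1 1 * x 1 0 := ⟨_, rfl⟩
  by_cases hD : p * p + q * r = 0
  · exfalso
    let K : Subgroup SL(2, F) :=
      { carrier := {g | ∀ v w : F, (p * v + q * w = 0 ∧ r * v + p * w = 0) ↔
          (p * (g 0 0 * v + g 0 1 * w) + q * (g 1 0 * v + g 1 1 * w) = 0 ∧
            r * (g 0 0 * v + g 0 1 * w) + p * (g 1 0 * v + g 1 1 * w) = 0)}
        one_mem' := by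
          intro v w
          simp
        mul_mem' := by
          intro a b ha hb v w
          rw [hb v w, ha]
          simp only [mul_e]
          constructor
          · rintro ⟨h1, h2⟩
            exact ⟨by linear_combination h1, by linear_combination h2⟩
          · rintro ⟨h1, h2⟩
            exact ⟨by linear_combination h1, by linear_combination h2⟩
        inv_mem' := by
          intro a ha v w
          have hda := det_e a
          have e1 : a 0 0 * (a⁻¹ 0 0 * v + a⁻¹ 0 1 * w) + a 0 1 * (a⁻¹ 1 0 * v + a⁻¹ 1 1 * w) = v := by
            simp only [inv_e00, inv_e01, inv_e10, inv_e11]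
            grind
          have e2 : a 1 0 * (a⁻¹ 0 0 * v + a⁻¹ 0 1 * w) + a 1 1 * (a⁻¹ 1 0 * v + a⁻¹ 1 1 * w) = w := by
            simp only [inv_e00, inv_e01, inv_e10, inv_e11]
            grind
          have h := ha (a⁻¹ 0 0 * v + a⁻¹ 0 1 * w) (a⁻¹ 1 0 * v + a⁻¹ 1 1 * w)
          rw [e1, e2] at h
          exact h.symm }
    have hK : K = ⊤ := by
      rw [eq_top_iff, ← hxy, Subgroup.closure_le]
      have aux : ∀ z : SL(2, F),
          (∀ v w : F, p * (z 0 0 * v + z 0 1 * w) + q * (z 1 0 * v + z 1 1 * w) =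
            z 1 1 * (p * v + q * w) + z 0 1 * (r * v + p * w)) →
          (∀ v w : F, r * (z 0 0 * v + z 0 1 * w) + p * (z 1 0 * v + z 1 1 * w) =
            z 1 0 * (p * v + q * w) + z 0 0 * (r * v + p * w)) → z ∈ K := by
        intro z h1 h3 v w
        have hdz := det_e z
        rw [h1, h3]
        generalize p * v + q * w = A
        generalize r * v + p * w = B
        constructor
        · rintro ⟨rfl, rfl⟩
          simp
        · rintro ⟨k1, k2⟩
          constructor
          · linear_combination z 0 0 * k1 + z 0 1 * k2 - A * hdz - z 0 0 * z 0 1 * B * h2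
          · linear_combination z 1 0 * k1 + z 1 1 * k2 - B * hdz - z 1 0 * z 1 1 * A * h2
      intro z hz
      rcases hz with rfl | hz
      · apply aux
        · intro v w; rw [hp, hq, hr]; clear aux hp hq hr hD K; grind
        · intro v w; rw [hp, hq, hr]; clear aux hp hq hr hD K; grind
      · rw [Set.mem_singleton_iff] at hz
        subst hz
        apply aux
        · intro v w; rw [hp, hq, hr]; clear aux hp hq hr hD K; grind
        · intro v w; rw [hp, hq, hr]; clear aux hp hq hr hD K; grind
    have hup : up 1 ∈ K := by rw [hK]; trivial
    have hlow : low 1 ∈ K := by rw [hK]; trivial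
    have u1 := ((hup q p).mp ⟨by linear_combination p * q * h2, by linear_combination hD⟩).1
    simp only [up, mk_e00, mk_e01, mk_e10, mk_e11] at u1
    have p0 : p = 0 := by
      have : p * p = 0 := by linear_combination u1 - p * q * h2
      exact mul_self_eq_zero.mp this
    have l1 := ((hlow q p).mp ⟨by linear_combination p * q * h2, by linear_combination hD⟩).1
    simp only [low, mk_e00, mk_e01, mk_e10, mk_e11, p0] at l1
    have q0 : q = 0 := by
      have : q * q = 0 := by linear_combination l1
      exact mul_self_eq_zero.mp this
    have u2 := ((hup p r).mp ⟨by linear_combination hD, by linear_combination p * r * h2⟩).2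
    simp only [up, mk_e00, mk_e01, mk_e10, mk_e11, p0] at u2
    have r0 : r = 0 := by
      have : r * r = 0 := by linear_combination u2
      exact mul_self_eq_zero.mp this
    rw [p0] at hp
    rw [q0] at hq
    rw [r0] at hr
    have hcomm : x * y = y * x := by
      apply ext4 <;> simp only [mul_e]
      · linear_combination -hp - y 0 1 * x 1 0 * h2
      · linear_combination -hq - (y 0 0 * x 0 1 + y 0 1 * x 1 1) * h2
      · linear_combination -hr - (y 1 0 * x 0 0 + y 1 1 * x 1 0) * h2
      · linear_combination -hp + (-1) * y 1 0 * x 0 1 * h2 + 0 * h2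
    have hc1 : Subgroup.closure {x, y} ≤ Subgroup.centralizer {x, y} := by
      rw [Subgroup.closure_le]
      rintro z (rfl | rfl) <;> rw [SetLike.mem_coe, Subgroup.mem_centralizer_iff] <;>
        rintro w (rfl | rfl) <;> simp [hcomm]
    have hc2 : Subgroup.closure {x, y} ≤ Subgroup.center SL(2, F) := by
      rw [Subgroup.closure_le]
      intro z hz
      rw [SetLike.mem_coe, Subgroup.mem_center_iff]
      intro g
      have : g ∈ Subgroup.centralizer {x, y} := hc1 (by rw [hxy]; trivial)
      exact (Subgroup.mem_centralizer_iff.mp this z hz).symm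
    obtain ⟨s, t, hst⟩ := sl_noncomm (F := F)
    have ht : t ∈ Subgroup.center SL(2, F) := hc2 (by rw [hxy]; trivial)
    exact hst (Subgroup.mem_center_iff.mp ht s)
  · obtain ⟨c, hc⟩ := FiniteField.isSquare_of_char_two (ringChar.eq F 2) (p * p + q * r)⁻¹
    have hc' : c * c * (p * p + q * r) = 1 := by rw [← hc]; exact inv_mul_cancel₀ hD
    refine ⟨mk (c * p) (c * q) (c * r) (c * p) (by linear_combination hc'), ?_, ?_⟩
    · rw [mul_inv_eq_iff_eq_mul]
      apply ext4 <;> simp only [mul_e, mk_e00, mk_e01, mk_e10, mk_e11, inv_e00, inv_e01,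
        inv_e10, inv_e11, hp, hq, hr] <;> clear hc hc' hD hp hq hr <;> grind
    · rw [mul_inv_eq_iff_eq_mul]
      apply ext4 <;> simp only [mul_e, mk_e00, mk_e01, mk_e10, mk_e11, inv_e00, inv_e01,
        inv_e10, inv_e11, hp, hq, hr] <;> clear hc hc' hD hp hq hr <;> grind

lemma center_sl : Subgroup.center SL(2, F) = ⊥ := by
  have h2 : (2 : F) = 0 := two_zero
  rw [eq_bot_iff]
  intro z hz
  rw [Subgroup.mem_center_iff] at hz
  have h1 := hz (up 1)
  have h3 := hz (low 1)
  have hd := det_e z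
  have a1 := congrArg (fun g : SL(2, F) => g 0 0) h1
  have a2 := congrArg (fun g : SL(2, F) => g 0 1) h1
  have a3 := congrArg (fun g : SL(2, F) => g 0 0) h3
  simp only [mul_e, up, low, mk_e00, mk_e01, mk_e10, mk_e11] at a1 a2 a3
  rw [Subgroup.mem_bot]
  have b1 : z 1 0 = 0 := by grind
  have b2 : z 0 1 = 0 := by grind
  have b3 : z 0 0 = z 1 1 := by grind
  have b4 : (z 0 0 + 1) * (z 0 0 + 1) = 0 := by grind
  have b5 := mul_self_eq_zero.mp b4
  apply ext4 <;> simp only [one_e00, one_e01, one_e10, one_e11] <;> grind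

/-- In characteristic two the projective group is the special linear group. -/
noncomputable def pslEquiv : PSL(2, F) ≃* SL(2, F) :=
  (QuotientGroup.quotientMulEquivOfEq center_sl).trans QuotientGroup.quotientBot

end final

end BV

/-- for `q = 2^e > 2` a power of `2` and `k ≥ 1` with `(q,k) ≠ (4,1)`,
if the characteristically simple group `L₂(q)^k = PSL(2,F_q)^k` is `2`-generated then it
is a purely strongly real Beauville group: it is a Beauville group and every Beauville
structure of it is strongly real. -/
theorem psl_two_char_two_power_purely_strongly_real
    (e k : ℕ) (he : 2 ≤ e) (hk : 1 ≤ k) (hqk : ((2 : ℕ) ^ e, k) ≠ (4, 1))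
    (h2gen : ∃ a b : Fin k → PSL(2, GaloisField 2 e), Subgroup.closure {a, b} = ⊤) :
    (∃ x₁ y₁ x₂ y₂ : Fin k → PSL(2, GaloisField 2 e),
        IsBeauvilleStructure x₁ y₁ x₂ y₂) ∧
    ∀ x₁ y₁ x₂ y₂ : Fin k → PSL(2, GaloisField 2 e),
      IsBeauvilleStructure x₁ y₁ x₂ y₂ → IsStronglyRealStructure x₁ y₁ x₂ y₂ := by
  have hq : Nat.card (GaloisField 2 e) = 2 ^ e := GaloisField.card 2 e (by omega)
  have h4 : 4 ≤ Nat.card (GaloisField 2 e) := by rw [hq]; exact BV.card_gt he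
  have hS : IsSimpleGroup PSL(2, GaloisField 2 e) :=
    Matrix.ProjectiveSpecialLinearGroup.rank_two_simple h4
  let ψ : PSL(2, GaloisField 2 e) ≃* SL(2, GaloisField 2 e) := BV.pslEquiv
  have : Nontrivial SL(2, GaloisField 2 e) := ψ.symm.toEquiv.nontrivial
  have : IsSimpleGroup SL(2, GaloisField 2 e) :=
    ψ.isSimpleGroup_congr.mp hS
  let Ψ : (Fin k → PSL(2, GaloisField 2 e)) ≃* (Fin k → SL(2, GaloisField 2 e)) :=
    MulEquiv.piCongrRight fun _ => ψ
  constructor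
  · obtain ⟨a, b, hab⟩ := h2gen
    obtain ⟨x₁, y₁, x₂, y₂, h⟩ := BV.beauville_sl hq he hk hqk ⟨_, _, BV.gen_map Ψ hab⟩
    exact ⟨_, _, _, _, BV.beauville_map Ψ.symm h⟩
  · intro x₁ y₁ x₂ y₂ h
    exact (BV.invPairs_sl.map ψ.symm).pi.stronglyReal h
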